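/- Let n, k ∈ ℕ and let M_0 ⊊ M_1 ⊊ ⋯ ⊊ M_k be a strictly increasing chain of ℚ[x]-submodules of ℚ[x]^n, all having the same rank r ≤ n. Assume that M_0 is generated by a finite collection of vectors all of whose entries are polynomials of degree at most d. Then k ≤ d·r. -/

import Mathlib

/-!
Choose an `r × r` minor `φ` that does not vanish on a basis of `M 0`. Being multilinear, it does
not vanish on some `r`-tuple `v` of generators either, and there its degree is at most `d * r`.
Expressing `r` vectors of `M i` in a basis `c` of `M (i + 1)` multiplies the minor by a
change-of-basis determinant, which is not a unit since the vectors lie in a proper submodule.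
So, passing from `v` to bases of `M 1, …, M k` in turn, the degree of `φ` drops at each of the
`k` steps.
-/

open Module Polynomial

section MultilinearMap

variable {R κ W : Type*} {V : κ → Type*} [Finite κ] [CommSemiring R]
  [∀ i, AddCommMonoid (V i)] [∀ i, Module R (V i)] [AddCommMonoid W] [Module R W]

theorem exists_mem_multilinearMap_ne_zero_of_mem_span (φ : MultilinearMap R V W)
    {S : ∀ i, Set (V i)} {v : ∀ i, V i} (hv : ∀ i, v i ∈ Submodule.span R (S i))
    (hφ : φ v ≠ 0) : ∃ w : ∀ i, V i, (∀ i, w i ∈ S i) ∧ φ w ≠ 0 := by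
  by_contra! h
  have hrestrict : φ.compLinearMap (fun i => (Submodule.span R (S i)).subtype) = 0 :=
    MultilinearMap.ext_of_span_eq_top
      (g := fun i (s : (Subtype.val : Submodule.span R (S i) → V i) ⁻¹' S i) => s.1)
      (fun i => by rw [Subtype.range_coe, Submodule.span_span_coe_preimage])
      (fun j => h (fun i => j i) fun i => (j i).2)
  let u (i : κ) : Submodule.span R (S i) := ⟨v i, hv i⟩
  exact hφ (DFunLike.congr_fun hrestrict u)

end MultilinearMap

section Matrix

variable {κ ι : Type*}

theorem span_range_col_eq_top_of_linearIndependent_row {K : Type*} [Field K] [Finite κ] [Finite ι]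
    {A : Matrix κ ι K} (hA : LinearIndependent K A.row) :
    Submodule.span K (Set.range A.col) = ⊤ := by
  cases nonempty_fintype κ
  cases nonempty_fintype ι
  refine Submodule.eq_top_of_finrank_eq ?_
  rw [← A.rank_eq_finrank_span_cols, hA.rank_matrix, finrank_fintype_fun_eq_card]

variable [Fintype κ] [DecidableEq κ]

theorem exists_det_submatrix_ne_zero_of_span_range_col_eq_top {R : Type*} [CommRing R]
    [Nontrivial R] {A : Matrix κ ι R} (hA : Submodule.span R (Set.range A.col) = ⊤) :
    ∃ f : κ → ι, (A.submatrix id f).det ≠ 0 := by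
  obtain ⟨w, hw, hdet⟩ := exists_mem_multilinearMap_ne_zero_of_mem_span
    (Matrix.detRowAlternating (n := κ) (R := R)).toMultilinearMap
    (S := fun _ => Set.range A.col) (v := fun i => (1 : Matrix κ κ R) i)
    (fun i => hA ▸ Submodule.mem_top) (Matrix.det_one.trans_ne one_ne_zero)
  choose f hf using hw
  obtain rfl : (fun i => A.col (f i)) = w := funext hf
  exact ⟨f, (Matrix.det_transpose (A.submatrix id f)).symm.trans_ne hdet⟩

theorem exists_det_submatrix_ne_zero_of_linearIndependent_row {R : Type*} [CommRing R] [IsDomain R]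
    [Finite ι] {A : Matrix κ ι R} (hA : LinearIndependent R A.row) :
    ∃ f : κ → ι, (A.submatrix id f).det ≠ 0 := by
  have hAF : LinearIndependent (FractionRing R) (A.map (algebraMap R (FractionRing R))).row :=
    (linearIndependent_algebraMap_comp_iff (S := FractionRing R) (v := A.row)).2 hA
  obtain ⟨f, hf⟩ := exists_det_submatrix_ne_zero_of_span_range_col_eq_top
    (span_range_col_eq_top_of_linearIndependent_row hAF)
  refine ⟨f, fun h => hf ?_⟩
  rw [Matrix.submatrix_map, ← RingHom.mapMatrix_apply, ← RingHom.map_det, h, map_zero]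

theorem natDegree_det_le_mul_card {R : Type*} [CommRing R] {A : Matrix κ κ R[X]} {d : ℕ}
    (hA : ∀ i j, (A i j).natDegree ≤ d) : A.det.natDegree ≤ d * Fintype.card κ := by
  rw [Matrix.det_apply]
  refine natDegree_sum_le_of_forall_le _ _ fun σ _ => ?_
  calc (Equiv.Perm.sign σ • ∏ i, A (σ i) i).natDegree
      ≤ (∏ i, A (σ i) i).natDegree := natDegree_smul_le _ _
    _ ≤ ∑ i, (A (σ i) i).natDegree := natDegree_prod_le _ _
    _ ≤ ∑ _i : κ, d := Finset.sum_le_sum fun i _ => hA _ _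
    _ = d * Fintype.card κ := by simp [mul_comm]

end Matrix

section AlternatingMap

variable {R V κ : Type*} [CommRing R] [AddCommGroup V] [Module R V]

theorem alternatingMap_coe_eq_mul_det [Fintype κ] [DecidableEq κ] {P : Submodule R V}
    (φ : V [⋀^κ]→ₗ[R] R) (c : Basis κ R P) (v : κ → P) :
    φ (fun i => v i) = φ (fun i => c i) * c.det v :=
  DFunLike.congr_fun ((φ.compLinearMap P.subtype).eq_smul_basis_det c) v

theorem dvdNotUnit_alternatingMap_of_lt [Finite κ] {N P : Submodule R V} (hNP : N < P)
    (φ : V [⋀^κ]→ₗ[R] R) (c : Basis κ R P) {v : κ → V} (hv : ∀ i, v i ∈ N) (hφ : φ v ≠ 0) :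
    DvdNotUnit (φ fun i => c i) (φ v) := by
  classical
  cases nonempty_fintype κ
  let u : κ → P := fun i => ⟨v i, hNP.le (hv i)⟩
  have hφv : φ v = φ (fun i => c i) * c.det u := alternatingMap_coe_eq_mul_det φ c u
  refine ⟨left_ne_zero_of_mul (hφv ▸ hφ), c.det u, fun hunit => hNP.not_ge ?_, hφv⟩
  have hspan : Submodule.span R (Set.range u) = ⊤ := ((Basis.is_basis_iff_det c).2 hunit).2
  calc P = (Submodule.span R (Set.range u)).map P.subtype := by rw [hspan, P.map_subtype_top]
    _ ≤ N := by
      rw [Submodule.map_span_le]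
      rintro _ ⟨i, rfl⟩
      exact hv i

end AlternatingMap

section Chain

variable {K : Type*} [Field K]

theorem natDegree_lt_of_dvdNotUnit {p q : K[X]} (hpq : DvdNotUnit p q) (hq : q ≠ 0) :
    p.natDegree < q.natDegree := by
  obtain ⟨hp, s, hs, rfl⟩ := hpq
  rw [natDegree_mul hp (right_ne_zero_of_mul hq)]
  exact Nat.lt_add_of_pos_right (natDegree_pos_iff_degree_pos.2
    (degree_pos_of_ne_zero_of_nonunit (right_ne_zero_of_mul hq) hs))

theorem chain_length_le_natDegree_alternatingMap {V : Type*} [AddCommGroup V] [Module K[X] V]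
    [Module.Finite K[X] V] [IsTorsionFree K[X] V] {k r : ℕ} {M : ℕ → Submodule K[X] V}
    (hchain : ∀ i < k, M i < M (i + 1)) (hrank : ∀ i < k, finrank K[X] (M (i + 1)) = r)
    (φ : V [⋀^Fin r]→ₗ[K[X]] K[X]) {v : Fin r → V} (hv : ∀ i, v i ∈ M 0) (hφ : φ v ≠ 0) :
    k ≤ (φ v).natDegree := by
  induction k generalizing M v with
  | zero => exact Nat.zero_le _
  | succ k ih =>
    let c : Basis (Fin r) K[X] (M 1) := finBasisOfFinrankEq _ _ (hrank 0 k.succ_pos)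
    have hdvd := dvdNotUnit_alternatingMap_of_lt (hchain 0 k.succ_pos) φ c hv hφ
    have hk : k ≤ (φ fun i => c i).natDegree :=
      ih (M := fun i => M (i + 1)) (fun i hi => hchain _ (Nat.succ_lt_succ hi))
        (fun i hi => hrank _ (Nat.succ_lt_succ hi)) (fun i => (c i).2) hdvd.1
    exact hk.trans_lt (natDegree_lt_of_dvdNotUnit hdvd hφ)

theorem polynomial_chain_length_le_general {ι : Type*} [Finite ι] {k r d : ℕ}
    {M : ℕ → Submodule K[X] (ι → K[X])} (hchain : ∀ i < k, M i < M (i + 1))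
    (hrank : ∀ i ≤ k, finrank K[X] (M i) = r) {S : Set (ι → K[X])}
    (hgen : M 0 = Submodule.span K[X] S) (hdeg : ∀ v ∈ S, ∀ j, (v j).natDegree ≤ d) :
    k ≤ d * r := by
  let b : Basis (Fin r) K[X] (M 0) := finBasisOfFinrankEq _ _ (hrank 0 k.zero_le)
  have hbS (i : Fin r) : (b i : ι → K[X]) ∈ Submodule.span K[X] S := hgen.le (b i).2
  have hb : LinearIndependent K[X] fun i => (b i : ι → K[X]) :=
    b.linearIndependent.map' (M 0).subtype (M 0).ker_subtype
  obtain ⟨f, hf⟩ := exists_det_submatrix_ne_zero_of_linearIndependent_row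
    (A := Matrix.of fun i => (b i : ι → K[X])) hb
  let φ : (ι → K[X]) [⋀^Fin r]→ₗ[K[X]] K[X] :=
    Matrix.detRowAlternating.compLinearMap (LinearMap.funLeft K[X] K[X] f)
  obtain ⟨v, hvS, hφv⟩ := exists_mem_multilinearMap_ne_zero_of_mem_span φ.toMultilinearMap
    hbS hf
  have hvM (i : Fin r) : v i ∈ M 0 := hgen.ge (Submodule.subset_span (hvS i))
  calc k ≤ (φ v).natDegree := chain_length_le_natDegree_alternatingMap hchain
        (fun i hi => hrank (i + 1) hi) φ hvM hφv
    _ ≤ d * Fintype.card (Fin r) := natDegree_det_le_mul_card fun i j => hdeg _ (hvS i) (f j)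
    _ = d * r := by rw [Fintype.card_fin]

end Chain

/-- Let `M 0 ⊊ M 1 ⊊ ⋯ ⊊ M k` be a strictly increasing chain of
`ℚ[x]`-submodules of `ℚ[x]^n`, all of rank `r ≤ n`.  If `M 0` is generated by a finite
collection of vectors whose entries are polynomials of degree at most `d`, then
`k ≤ d·r`. -/
theorem polynomial_chain_length_le
    (n k r d : ℕ) (hrn : r ≤ n)
    (M : ℕ → Submodule (Polynomial ℚ) (Fin n → Polynomial ℚ))
    (hchain : ∀ i < k, M i < M (i + 1))
    (hrank : ∀ i ≤ k, Module.finrank (Polynomial ℚ) (M i) = r)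
    (S : Finset (Fin n → Polynomial ℚ))
    (hgen : M 0 = Submodule.span (Polynomial ℚ) (S : Set (Fin n → Polynomial ℚ)))
    (hdeg : ∀ v ∈ S, ∀ j, (v j).natDegree ≤ d) :
    k ≤ d * r :=
  polynomial_chain_length_le_general hchain hrank hgen hdeg
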